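/- Let V: ℝ² → ℝ be smooth, nonnegative and supported in the ball B(0,R), let a > 0, and suppose w₀ ∈ C²(ℝ²) satisfies −Δw₀ + ½Vw₀ = 0 on ℝ² and w₀(x) = ln(|x|/a) for all |x| ≥ R. Then ½∫_{ℝ²} V(x)w₀(x)dx = 2π. -/

import Mathlib

/-!
The scattering equation says `V w₀ = 2 Δw₀`, so the claim is that a `C²` function equal to
`log ‖x‖ + c` far from the origin has Laplacian of total mass `2π`. As `log ‖x‖` is harmonic away
from the origin, this mass can be computed over any large square `[-L, L]²`. There the divergence
theorem reduces it to the flux of `∇ log ‖x‖ = x / ‖x‖²` through the four sides, each of which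
contributes `∫_{-L}^L L / (L² + t²) dt = π / 2`.
-/

open MeasureTheory Real

/-- The Laplacian of a function on `ℝ²`, as the sum of the repeated second partial
derivatives in the coordinate directions. -/
noncomputable def laplacian2 (f : EuclideanSpace ℝ (Fin 2) → ℝ)
    (x : EuclideanSpace ℝ (Fin 2)) : ℝ :=
  ∑ i : Fin 2,
    fderiv ℝ (fun y => fderiv ℝ f y (EuclideanSpace.single i 1)) x (EuclideanSpace.single i 1)

open Filter Bornology Topology Set

section LogNorm

variable {E : Type*} [NormedAddCommGroup E] [InnerProductSpace ℝ E]

lemma hasFDerivAt_log_norm {x : E} (hx : x ≠ 0) :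
    HasFDerivAt (fun y : E => log ‖y‖) ((‖x‖ ^ 2)⁻¹ • innerSL ℝ x) x := by
  have hlog : (fun y : E => log ‖y‖) = fun y => 1 / 2 * log (‖y‖ ^ 2) := by
    funext y
    rw [log_pow]
    ring
  rw [hlog]
  refine (((hasStrictFDerivAt_norm_sq x).hasFDerivAt.log (by positivity)).const_mul
    (1 / 2 : ℝ)).congr_fderiv ?_
  module

variable {ι : Type*} [Fintype ι] [DecidableEq ι]

lemma fderiv_const_mul_log_norm_add_const_single (k c : ℝ) {x : EuclideanSpace ℝ ι} (hx : x ≠ 0)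
    (i : ι) :
    fderiv ℝ (fun y : EuclideanSpace ℝ ι => k * log ‖y‖ + c) x (EuclideanSpace.single i 1) =
      k * (x i / ‖x‖ ^ 2) := by
  rw [(((hasFDerivAt_log_norm hx).const_mul k).add_const c).fderiv]
  simp [EuclideanSpace.inner_single_right, div_eq_inv_mul]

lemma fderiv_apply_div_norm_sq_single {x : EuclideanSpace ℝ ι} (hx : x ≠ 0) (i : ι) :
    fderiv ℝ (fun y : EuclideanSpace ℝ ι => y i / ‖y‖ ^ 2) x (EuclideanSpace.single i 1) =
      (‖x‖ ^ 2 - 2 * x i ^ 2) / (‖x‖ ^ 2) ^ 2 := by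
  have hnorm := (hasStrictFDerivAt_norm_sq x).hasFDerivAt
  have hcoord := (EuclideanSpace.proj i : EuclideanSpace ℝ ι →L[ℝ] ℝ).hasFDerivAt (x := x)
  have hinv := (hasDerivAt_inv (by positivity)).comp_hasFDerivAt x hnorm
  have hmul : fderiv ℝ (fun y : EuclideanSpace ℝ ι => y i / ‖y‖ ^ 2) x = _ :=
    (hcoord.mul hinv).fderiv
  rw [hmul]
  simp only [PiLp.proj_apply, neg_smul, smul_neg, Function.comp_apply, add_apply, neg_apply,
    smul_apply, coe_innerSL_apply, EuclideanSpace.inner_single_right, conj_trivial, one_mul,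
    nsmul_eq_mul, Nat.cast_ofNat, smul_eq_mul, PiLp.single_eq_same, mul_one]
  field_simp
  ring

end LogNorm

lemma laplacian2_congr {f g : EuclideanSpace ℝ (Fin 2) → ℝ} {x : EuclideanSpace ℝ (Fin 2)}
    (h : f =ᶠ[𝓝 x] g) : laplacian2 f x = laplacian2 g x := by
  refine Finset.sum_congr rfl fun i _ => ?_
  have hderiv : (fun y => fderiv ℝ f y (EuclideanSpace.single i 1)) =ᶠ[𝓝 x]
      fun y => fderiv ℝ g y (EuclideanSpace.single i 1) :=
    h.fderiv.fun_comp fun φ => φ (EuclideanSpace.single i 1)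
  rw [hderiv.fderiv_eq]

lemma laplacian2_const_mul_log_norm_add_const (k c : ℝ) {x : EuclideanSpace ℝ (Fin 2)}
    (hx : x ≠ 0) : laplacian2 (fun y => k * log ‖y‖ + c) x = 0 := by
  have hderiv (i : Fin 2) :
      (fun y => fderiv ℝ (fun z : EuclideanSpace ℝ (Fin 2) => k * log ‖z‖ + c) y
        (EuclideanSpace.single i 1)) =ᶠ[𝓝 x] fun y => k * (y i / ‖y‖ ^ 2) :=
    (eventually_ne_nhds hx).mono fun y hy => fderiv_const_mul_log_norm_add_const_single k c hy i
  have hsecond (i : Fin 2) :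
      fderiv ℝ (fun y : EuclideanSpace ℝ (Fin 2) => k * (y i / ‖y‖ ^ 2)) x
        (EuclideanSpace.single i 1) = k * ((‖x‖ ^ 2 - 2 * x i ^ 2) / (‖x‖ ^ 2) ^ 2) := by
    rw [← fderiv_apply_div_norm_sq_single hx i]
    exact DFunLike.congr_fun (congrFun (fderiv_const_smul_field k) x) _
  simp only [laplacian2, (hderiv _).fderiv_eq, hsecond, Fin.sum_univ_two]
  rw [EuclideanSpace.real_norm_sq_eq, Fin.sum_univ_two]
  ring

/-- The Euclidean plane as `ℝ × ℝ`, the type on which Mathlib states the planar divergence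
theorem. -/
noncomputable def planeEquiv : (ℝ × ℝ) ≃L[ℝ] EuclideanSpace ℝ (Fin 2) :=
  ((EuclideanSpace.equiv (Fin 2) ℝ).trans (ContinuousLinearEquiv.finTwoArrow ℝ ℝ)).symm

lemma planeEquiv_apply (p : ℝ × ℝ) : planeEquiv p = !₂[p.1, p.2] := rfl

lemma planeEquiv_one_zero : planeEquiv (1, 0) = EuclideanSpace.single 0 1 := by
  ext i
  fin_cases i <;> simp [planeEquiv_apply]

lemma planeEquiv_zero_one : planeEquiv (0, 1) = EuclideanSpace.single 1 1 := by
  ext i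
  fin_cases i <;> simp [planeEquiv_apply]

lemma norm_planeEquiv_sq (p : ℝ × ℝ) : ‖planeEquiv p‖ ^ 2 = p.1 ^ 2 + p.2 ^ 2 := by
  simp [EuclideanSpace.real_norm_sq_eq, planeEquiv_apply]

lemma norm_le_norm_planeEquiv (p : ℝ × ℝ) : ‖p‖ ≤ ‖planeEquiv p‖ :=
  max_le (PiLp.norm_apply_le (planeEquiv p) 0) (PiLp.norm_apply_le (planeEquiv p) 1)

lemma measurePreserving_planeEquiv : MeasurePreserving planeEquiv :=
  (PiLp.volume_preserving_toLp (Fin 2)).comp ((volume_preserving_finTwoArrow ℝ).symm _)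

lemma integral_comp_planeEquiv {F : Type*} [NormedAddCommGroup F] [NormedSpace ℝ F]
    (f : EuclideanSpace ℝ (Fin 2) → F) : ∫ p, f (planeEquiv p) = ∫ x, f x :=
  measurePreserving_planeEquiv.integral_comp
    planeEquiv.toHomeomorph.measurableEmbedding f

lemma setIntegral_Icc_divergence {G : Fin 2 → EuclideanSpace ℝ (Fin 2) → ℝ}
    (hG : ∀ i, ContDiff ℝ 1 (G i)) {a b : ℝ × ℝ} (hab : a ≤ b) :
    ∫ p in Icc a b, ∑ i, fderiv ℝ (G i) (planeEquiv p) (EuclideanSpace.single i 1) =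
      (((∫ s in a.1..b.1, G 1 (planeEquiv (s, b.2))) -
          ∫ s in a.1..b.1, G 1 (planeEquiv (s, a.2))) +
          ∫ t in a.2..b.2, G 0 (planeEquiv (b.1, t))) -
          ∫ t in a.2..b.2, G 0 (planeEquiv (a.1, t)) := by
  have hcont (i : Fin 2) : Continuous fun p => G i (planeEquiv p) :=
    (hG i).continuous.comp planeEquiv.continuous
  have hderiv (i : Fin 2) (p : ℝ × ℝ) : HasFDerivAt (fun p => G i (planeEquiv p))
      (fderiv ℝ (G i) (planeEquiv p) ∘L planeEquiv) p :=
    ((hG i).differentiable one_ne_zero _).hasFDerivAt.comp p planeEquiv.hasFDerivAt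
  have hint : Continuous fun p =>
      ∑ i, fderiv ℝ (G i) (planeEquiv p) (EuclideanSpace.single i 1) :=
    continuous_finsetSum _ fun i _ => (((hG i).continuous_fderiv one_ne_zero).comp
      planeEquiv.continuous).clm_apply continuous_const
  simp only [Fin.sum_univ_two, ← planeEquiv_one_zero, ← planeEquiv_zero_one] at hint ⊢
  exact integral_divergence_prod_Icc_of_hasFDerivAt_of_le _ _ _ _ a b hab
    (hcont 0).continuousOn (hcont 1).continuousOn (fun p _ => hderiv 0 p)
    (fun p _ => hderiv 1 p) hint.integrableOn_Icc

lemma intervalIntegral_div_sq_add_sq {L : ℝ} (hL : L ≠ 0) :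
    ∫ t in (-L)..L, L / (L ^ 2 + t ^ 2) = π / 2 := by
  simp only [div_eq_mul_inv, intervalIntegral.integral_const_mul, integral_inv_sq_add_sq hL]
  rw [mul_inv_cancel_left₀ hL, neg_mul, mul_inv_cancel₀ hL, arctan_neg, arctan_one]
  ring

lemma exists_pos_forall_le_norm_eventuallyEq_nhds {E F : Type*} [SeminormedAddCommGroup E]
    {f g : E → F} (h : f =ᶠ[cobounded E] g) : ∃ L > 0, ∀ x, L ≤ ‖x‖ → f =ᶠ[𝓝 x] g := by
  obtain ⟨R, -, hR⟩ := hasBasis_cobounded_norm.eventually_iff.1 h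
  refine ⟨max R 0 + 1, by positivity, fun x hx => ?_⟩
  have hRx : R < ‖x‖ := by linarith [le_max_left R 0]
  exact (continuous_norm.continuousAt.eventually_const_lt hRx).mono fun y hy => hR hy.le

lemma setIntegral_square_laplacian2_of_eventuallyEq_log_norm
    {f : EuclideanSpace ℝ (Fin 2) → ℝ} (hf : ContDiff ℝ 2 f) {k c L : ℝ} (hL : 0 < L)
    (hlog : ∀ x, L ≤ ‖x‖ → f =ᶠ[𝓝 x] fun y => k * log ‖y‖ + c) :
    ∫ p in Icc (-L, -L) (L, L), laplacian2 f (planeEquiv p) = 2 * π * k := by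
  set G : Fin 2 → EuclideanSpace ℝ (Fin 2) → ℝ :=
    fun i x => fderiv ℝ f x (EuclideanSpace.single i 1)
  have hG_contDiff (i : Fin 2) : ContDiff ℝ 1 (G i) :=
    (hf.fderiv_right (m := 1) (by norm_num)).clm_apply contDiff_const
  have hG (i : Fin 2) (p : ℝ × ℝ) (hp : L ≤ ‖p‖) :
      G i (planeEquiv p) = k * (planeEquiv p i / (p.1 ^ 2 + p.2 ^ 2)) := by
    have hLp := hp.trans (norm_le_norm_planeEquiv p)
    rw [← norm_planeEquiv_sq, ← fderiv_const_mul_log_norm_add_const_single k c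
      (norm_pos_iff.1 (hL.trans_le hLp)), ← (hlog _ hLp).fderiv_eq]
  have htop (s : ℝ) : G 1 (planeEquiv (s, L)) = k * (L / (L ^ 2 + s ^ 2)) := by
    rw [hG 1 _ (by simp [Prod.norm_def, le_abs_self]), add_comm]
    rfl
  have hbottom (s : ℝ) : G 1 (planeEquiv (s, -L)) = -(k * (L / (L ^ 2 + s ^ 2))) := by
    rw [hG 1 _ (by simp [Prod.norm_def, le_abs_self]), add_comm, neg_sq, ← mul_neg, ← neg_div]
    rfl
  have hright (t : ℝ) : G 0 (planeEquiv (L, t)) = k * (L / (L ^ 2 + t ^ 2)) :=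
    hG 0 _ (by simp [Prod.norm_def, le_abs_self])
  have hleft (t : ℝ) : G 0 (planeEquiv (-L, t)) = -(k * (L / (L ^ 2 + t ^ 2))) := by
    rw [hG 0 _ (by simp [Prod.norm_def, le_abs_self]), neg_sq, ← mul_neg, ← neg_div]
    rfl
  have hsquare : ((-L, -L) : ℝ × ℝ) ≤ (L, L) := ⟨by simpa using hL.le, by simpa using hL.le⟩
  refine (setIntegral_Icc_divergence hG_contDiff hsquare).trans ?_
  simp only [htop, hbottom, hright, hleft, intervalIntegral.integral_neg,
    intervalIntegral.integral_const_mul, intervalIntegral_div_sq_add_sq hL.ne']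
  ring

theorem integral_laplacian2_of_eventuallyEq_log_norm {f : EuclideanSpace ℝ (Fin 2) → ℝ}
    (hf : ContDiff ℝ 2 f) {k c : ℝ} (hlog : f =ᶠ[cobounded _] fun x => k * log ‖x‖ + c) :
    ∫ x, laplacian2 f x = 2 * π * k := by
  obtain ⟨L, hL, hlocal⟩ := exists_pos_forall_le_norm_eventuallyEq_nhds hlog
  have hsquare (p : ℝ × ℝ) (hp : ‖p‖ ≤ L) : p ∈ Icc (-L, -L) (L, L) := by
    obtain ⟨h₁, h₂⟩ := max_le_iff.1 hp
    exact ⟨⟨(abs_le.1 h₁).1, (abs_le.1 h₂).1⟩, ⟨(abs_le.1 h₁).2, (abs_le.1 h₂).2⟩⟩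
  have hharmonic (p : ℝ × ℝ) (hp : p ∉ Icc (-L, -L) (L, L)) :
      laplacian2 f (planeEquiv p) = 0 := by
    have hLp : L < ‖planeEquiv p‖ :=
      (not_le.1 (mt (hsquare p) hp)).trans_le (norm_le_norm_planeEquiv p)
    rw [laplacian2_congr (hlocal _ hLp.le),
      laplacian2_const_mul_log_norm_add_const k c (norm_pos_iff.1 (hL.trans hLp))]
  rw [← integral_comp_planeEquiv, ← setIntegral_eq_integral_of_forall_compl_eq_zero hharmonic]
  exact setIntegral_square_laplacian2_of_eventuallyEq_log_norm hf hL hlocal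

theorem scattering_normalization_general (V w₀ : EuclideanSpace ℝ (Fin 2) → ℝ) (a : ℝ)
    (ha : 0 < a) (hw_C2 : ContDiff ℝ 2 w₀)
    (hscatt : ∀ x, -laplacian2 w₀ x + (1 / 2) * V x * w₀ x = 0)
    (hw_out : w₀ =ᶠ[cobounded _] fun x => log (‖x‖ / a)) :
    (1 / 2) * ∫ x, V x * w₀ x = 2 * π := by
  have hlap (x : EuclideanSpace ℝ (Fin 2)) : 1 / 2 * (V x * w₀ x) = laplacian2 w₀ x := by
    linarith [hscatt x]
  have hlog : w₀ =ᶠ[cobounded _] fun x => 1 * log ‖x‖ + -log a := by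
    filter_upwards [hw_out, eventually_cobounded_le_norm 1] with x hx hx1
    rw [hx, log_div (zero_lt_one.trans_le hx1).ne' ha.ne']
    ring
  rw [← integral_const_mul]
  simp only [hlap]
  rw [integral_laplacian2_of_eventuallyEq_log_norm hw_C2 hlog, mul_one]

/-- if `V : ℝ² → ℝ` is smooth, nonnegative, supported in `B(0,R)`, `a > 0`,
and `w₀ ∈ C²` satisfies the scattering equation `−Δw₀ + ½Vw₀ = 0` on `ℝ²` with
`w₀(x) = ln(|x|/a)` for `|x| ≥ R`, then `½∫ V w₀ = 2π`. -/
theorem scattering_normalization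
    (V w₀ : EuclideanSpace ℝ (Fin 2) → ℝ) (R a : ℝ)
    (hV_smooth : ContDiff ℝ (⊤ : ℕ∞) V) (hV_nonneg : ∀ x, 0 ≤ V x)
    (hV_supp : Function.support V ⊆ Metric.ball 0 R)
    (ha : 0 < a)
    (hw_C2 : ContDiff ℝ 2 w₀)
    (hscatt : ∀ x, -laplacian2 w₀ x + (1 / 2) * V x * w₀ x = 0)
    (hw_out : ∀ x : EuclideanSpace ℝ (Fin 2), R ≤ ‖x‖ → w₀ x = Real.log (‖x‖ / a)) :
    (1 / 2) * ∫ x, V x * w₀ x = 2 * π :=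
  scattering_normalization_general V w₀ a ha hw_C2 hscatt
    ((eventually_cobounded_le_norm R).mono hw_out)
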